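/- Let L > 0, T > 0, k > 0 with 3 − 5k² > 0, α ∈ {0,1}, and D = (0,∞) × (0,L). Let u₁, u₂ : [0,T] × ℝ² → ℝ be smooth, each satisfying the 2D Kawahara equation u_t + α u_x + u u_x + u_{xxx} + u_{xyy} − u_{xxxxx} = 0 on [0,T] × D with boundary conditions u_i(t,0,y) = u_{ix}(t,0,y) = 0 and u_i(t,x,0) = u_i(t,x,L) = 0, and suppose that for i = 1,2, e^{kx/2} times u_i and e^{kx/2} times each of its spatial partial derivatives up to order five is square-integrable over D uniformly in t, these weighted quantities tend to 0 as x → ∞ uniformly, and the functions t ↦ ∫_D (u_i² + u_{ix}² + u_{iy}² + u_{ixy}²) dxdy are integrable on (0,T). If u₁(0,x,y) = u₂(0,x,y) for all (x,y) ∈ D, then u₁(t,x,y) = u₂(t,x,y) for all t ∈ [0,T] and (x,y) ∈ D. -/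

import Mathlib

open MeasureTheory Real

/-- Partial derivative with respect to the first spatial coordinate. -/
noncomputable def pdx (u : ℝ × ℝ → ℝ) : ℝ × ℝ → ℝ :=
  fun p => deriv (fun x => u (x, p.2)) p.1

/-- Partial derivative with respect to the second spatial coordinate. -/
noncomputable def pdy (u : ℝ × ℝ → ℝ) : ℝ × ℝ → ℝ :=
  fun p => deriv (fun y => u (p.1, y)) p.2

/-- Mixed spatial partial derivative `∂_x^i ∂_y^j`. -/
noncomputable def pd (i j : ℕ) (u : ℝ × ℝ → ℝ) : ℝ × ℝ → ℝ :=
  pdx^[i] (pdy^[j] u)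

/-- Hypotheses on a regular solution of the 2D Kawahara equation on the
half-strip `D = (0,∞) × (0,L)` in the uniqueness theorem. -/
def IsRegularKawaharaSolution (L T k α : ℝ) (D : Set (ℝ × ℝ))
    (u : ℝ → ℝ × ℝ → ℝ) : Prop :=
  ContDiff ℝ (⊤ : ℕ∞) (Function.uncurry u) ∧
  (∀ t ∈ Set.Icc (0:ℝ) T, ∀ p ∈ D,
    deriv (fun s => u s p) t + α * pdx (u t) p + u t p * pdx (u t) p +
      pd 3 0 (u t) p + pd 1 2 (u t) p - pd 5 0 (u t) p = 0) ∧
  (∀ t ∈ Set.Icc (0:ℝ) T, ∀ y ∈ Set.Ioo (0:ℝ) L,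
    u t (0, y) = 0 ∧ pdx (u t) (0, y) = 0) ∧
  (∀ t ∈ Set.Icc (0:ℝ) T, ∀ x > (0:ℝ),
    u t (x, 0) = 0 ∧ u t (x, L) = 0) ∧
  (∀ i j : ℕ, i + j ≤ 5 →
    (∀ t ∈ Set.Icc (0:ℝ) T,
      IntegrableOn (fun p => (Real.exp (k * p.1 / 2) * pd i j (u t) p) ^ 2) D) ∧
    ∃ C : ℝ, ∀ t ∈ Set.Icc (0:ℝ) T,
      (∫ p in D, (Real.exp (k * p.1 / 2) * pd i j (u t) p) ^ 2) ≤ C) ∧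
  (∀ i j : ℕ, i + j ≤ 5 →
    ∀ ε > 0, ∃ M : ℝ, ∀ x ≥ M, ∀ y : ℝ, ∀ t ∈ Set.Icc (0:ℝ) T,
      |Real.exp (k * x / 2) * pd i j (u t) (x, y)| ≤ ε) ∧
  IntegrableOn
    (fun t => ∫ p in D,
      ((u t p) ^ 2 + (pdx (u t) p) ^ 2 + (pdy (u t) p) ^ 2 +
        (pdx (pdy (u t)) p) ^ 2))
    (Set.Ioo (0:ℝ) T)

/-!
The difference `z = u₁ - u₂` of two solutions solves a linear equation with transport field
`w = (u₁ + u₂) / 2`. Multiplied by `2 z`, the spatial terms of this equation become a divergence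
plus `w_x z²`. On a truncated strip `(0, R) × (0, L)` the flux density at `x = 0` is
`-z_xx² ≤ 0`, the flux through the lateral sides vanishes, and the flux through `x = R` tends to `0`
as `R → ∞` because `e^{kx/2} ≥ 1` makes `z` and its derivatives decay. Since `w_x` is bounded,
Grönwall's inequality for the energy `∫ z²`, followed by `R → ∞`, gives `z = 0`.
-/

section

open Set Filter Function
open scoped Topology ContDiff

section PartialDerivatives

variable {u v : ℝ × ℝ → ℝ} {p : ℝ × ℝ} {m n : WithTop ℕ∞}

lemma contDiff_deriv_param {E F : Type*} [NormedAddCommGroup E] [NormedSpace ℝ E]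
    [NormedAddCommGroup F] [NormedSpace ℝ F] {f : E → ℝ → F} {g : E → ℝ}
    (hf : ContDiff ℝ n (uncurry f)) (hg : ContDiff ℝ m g) (hmn : m + 1 ≤ n) :
    ContDiff ℝ m fun a => deriv (f a) (g a) :=
  hf.fderiv_apply hg contDiff_const hmn

lemma contDiff_pdx (hu : ContDiff ℝ n u) (hmn : m + 1 ≤ n) : ContDiff ℝ m (pdx u) :=
  contDiff_deriv_param (f := fun q x => u (x, q.2)) (hu.comp (by fun_prop)) contDiff_fst hmn

lemma contDiff_pdy (hu : ContDiff ℝ n u) (hmn : m + 1 ≤ n) : ContDiff ℝ m (pdy u) :=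
  contDiff_deriv_param (f := fun q y => u (q.1, y)) (hu.comp (by fun_prop)) contDiff_snd hmn

lemma contDiff_uncurry_pdx {f : ℝ → ℝ × ℝ → ℝ} (hf : ContDiff ℝ n (uncurry f))
    (hmn : m + 1 ≤ n) : ContDiff ℝ m fun q : ℝ × ℝ × ℝ => pdx (f q.1) q.2 :=
  contDiff_deriv_param (f := fun (q : ℝ × ℝ × ℝ) x => f q.1 (x, q.2.2))
    (hf.comp (g := uncurry f) (f := fun r : (ℝ × ℝ × ℝ) × ℝ => (r.1.1, r.2, r.1.2.2))
      (by fun_prop)) (by fun_prop) hmn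

lemma pdx_eq_fderiv (hu : DifferentiableAt ℝ u p) : pdx u p = fderiv ℝ u p (1, 0) :=
  (hu.hasFDerivAt.comp_hasDerivAt p.1
    ((hasDerivAt_id p.1).prodMk (hasDerivAt_const p.1 p.2))).deriv

lemma pdy_eq_fderiv (hu : DifferentiableAt ℝ u p) : pdy u p = fderiv ℝ u p (0, 1) :=
  (hu.hasFDerivAt.comp_hasDerivAt p.2
    ((hasDerivAt_const p.2 p.1).prodMk (hasDerivAt_id p.2))).deriv

lemma hasDerivAt_pdx (hu : DifferentiableAt ℝ u p) :
    HasDerivAt (fun x => u (x, p.2)) (pdx u p) p.1 :=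
  (hu.comp p.1 (f := fun x => (x, p.2)) (by fun_prop)).hasDerivAt

lemma hasDerivAt_pdy (hu : DifferentiableAt ℝ u p) :
    HasDerivAt (fun y => u (p.1, y)) (pdy u p) p.2 :=
  (hu.comp p.2 (f := fun y => (p.1, y)) (by fun_prop)).hasDerivAt

lemma pdx_linear_comb (hu : DifferentiableAt ℝ u p) (hv : DifferentiableAt ℝ v p) (a b : ℝ) :
    pdx (a • u + b • v) p = a * pdx u p + b * pdx v p :=
  (((hasDerivAt_pdx hu).const_mul a).add ((hasDerivAt_pdx hv).const_mul b)).deriv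

lemma pdy_linear_comb (hu : DifferentiableAt ℝ u p) (hv : DifferentiableAt ℝ v p) (a b : ℝ) :
    pdy (a • u + b • v) p = a * pdy u p + b * pdy v p :=
  (((hasDerivAt_pdy hu).const_mul a).add ((hasDerivAt_pdy hv).const_mul b)).deriv

lemma pdx_pdy_comm (hu : ContDiff ℝ 2 u) : pdx (pdy u) = pdy (pdx u) := by
  funext p
  have hu' : Differentiable ℝ u := hu.differentiable two_ne_zero
  have hx : pdx u = fun q => fderiv ℝ u q (1, 0) := funext fun q => pdx_eq_fderiv (hu' q)
  have hy : pdy u = fun q => fderiv ℝ u q (0, 1) := funext fun q => pdy_eq_fderiv (hu' q)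
  have hfderiv : DifferentiableAt ℝ (fderiv ℝ u) p :=
    (hu.fderiv_right one_add_one_eq_two.le).differentiable one_ne_zero p
  have hsnd : ∀ a b, fderiv ℝ (fun q => fderiv ℝ u q a) p b = fderiv ℝ (fderiv ℝ u) p b a :=
    fun a b => by simp [fderiv_clm_apply hfderiv (differentiableAt_const a)]
  rw [pdx_eq_fderiv ((contDiff_pdy hu one_add_one_eq_two.le).differentiable one_ne_zero p),
    pdy_eq_fderiv ((contDiff_pdx hu one_add_one_eq_two.le).differentiable one_ne_zero p),
    hx, hy, hsnd, hsnd]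
  exact hu.contDiffAt.isSymmSndFDerivAt (by simp) _ _

lemma contDiff_pd (hu : ContDiff ℝ ∞ u) (i j : ℕ) : ContDiff ℝ ∞ (pd i j u) :=
  Iterate.rec (ContDiff ℝ ∞) (Iterate.rec (ContDiff ℝ ∞) hu (fun _ h => contDiff_pdy h le_rfl) j)
    (fun _ h => contDiff_pdx h le_rfl) i

lemma differentiable_pd (hu : ContDiff ℝ ∞ u) (i j : ℕ) : Differentiable ℝ (pd i j u) :=
  (contDiff_pd hu i j).differentiable (by simp)

lemma pd_succ_left (i j : ℕ) (u : ℝ × ℝ → ℝ) : pd (i + 1) j u = pdx (pd i j u) :=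
  iterate_succ_apply' ..

lemma pd_succ_right (hu : ContDiff ℝ ∞ u) (i j : ℕ) : pd i (j + 1) u = pdy (pd i j u) := by
  induction i with
  | zero => exact iterate_succ_apply' ..
  | succ i ih =>
    rw [pd_succ_left, ih, pd_succ_left,
      pdx_pdy_comm (contDiff_infty.1 (contDiff_pd hu i j) 2)]

lemma pd_linear_comb (hu : ContDiff ℝ ∞ u) (hv : ContDiff ℝ ∞ v) (a b : ℝ) (i j : ℕ) :
    pd i j (a • u + b • v) = a • pd i j u + b • pd i j v := by
  have huv : ContDiff ℝ ∞ (a • u + b • v) := (hu.const_smul a).add (hv.const_smul b)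
  induction i with
  | zero =>
    induction j with
    | zero => rfl
    | succ j ih =>
      rw [pd_succ_right huv, ih, pd_succ_right hu, pd_succ_right hv]
      exact funext fun _ =>
        pdy_linear_comb (differentiable_pd hu 0 j _) (differentiable_pd hv 0 j _) a b
  | succ i ih =>
    rw [pd_succ_left, ih, pd_succ_left, pd_succ_left]
    exact funext fun _ =>
      pdx_linear_comb (differentiable_pd hu i j _) (differentiable_pd hv i j _) a b

end PartialDerivatives

section Integration

lemma integrableOn_of_subset_isCompact {X E : Type*} [TopologicalSpace X] [T2Space X]
    [MeasurableSpace X] [OpensMeasurableSpace X] [NormedAddCommGroup E]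
    {μ : Measure X} [IsFiniteMeasureOnCompacts μ] {f : X → E} {s K : Set X}
    (hf : Continuous f) (hK : IsCompact K) (hsK : s ⊆ K) : IntegrableOn f s μ :=
  (hf.continuousOn.integrableOn_compact hK).mono_set hsK

lemma hasDerivAt_setIntegral_of_continuous {X E : Type*} [TopologicalSpace X] [T2Space X]
    [MeasurableSpace X] [OpensMeasurableSpace X] [NormedAddCommGroup E] [NormedSpace ℝ E]
    {μ : Measure X} [IsFiniteMeasureOnCompacts μ] {f f' : ℝ → X → E} {s K : Set X}
    (hK : IsCompact K) (hs : MeasurableSet s) (hsK : s ⊆ K) (hf : ∀ t, Continuous (f t))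
    (hf' : Continuous (uncurry f')) (hderiv : ∀ t x, HasDerivAt (f · x) (f' t x) t) (t : ℝ) :
    HasDerivAt (fun τ => ∫ x in s, f τ x ∂μ) (∫ x in s, f' t x ∂μ) t := by
  obtain ⟨C, hC⟩ := ((isCompact_closedBall t 1).prod hK).exists_bound_of_continuousOn
    hf'.continuousOn
  have hint : ∀ {g : X → E}, Continuous g → IntegrableOn g s μ := fun hg =>
    integrableOn_of_subset_isCompact hg hK hsK
  refine (hasDerivAt_integral_of_dominated_loc_of_deriv_le (bound := fun _ => C)
    (Metric.closedBall_mem_nhds t one_pos) (.of_forall fun τ => (hint (hf τ)).1) (hint (hf t))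
    (hint (hf'.comp (by fun_prop : Continuous fun x => (t, x)))).1 ?_
    (integrableOn_of_subset_isCompact continuous_const hK hsK)
    (.of_forall fun x τ _ => hderiv τ x)).2
  filter_upwards [ae_restrict_mem hs] with x hx τ hτ using hC (τ, x) ⟨hτ, hsK hx⟩

lemma setIntegral_divergence_rect {f g : ℝ × ℝ → ℝ} (hf : ContDiff ℝ 1 f) (hg : ContDiff ℝ 1 g)
    {a b : ℝ × ℝ} (hab : a ≤ b) :
    ∫ p in Ioo a.1 b.1 ×ˢ Ioo a.2 b.2, (pdx f p + pdy g p) =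
      (∫ x in a.1..b.1, g (x, b.2)) - (∫ x in a.1..b.1, g (x, a.2)) +
        (∫ y in a.2..b.2, f (b.1, y)) - ∫ y in a.2..b.2, f (a.1, y) := by
  have hf' : Differentiable ℝ f := hf.differentiable one_ne_zero
  have hg' : Differentiable ℝ g := hg.differentiable one_ne_zero
  have hbox : volume.restrict (Ioo a.1 b.1 ×ˢ Ioo a.2 b.2) = volume.restrict (Icc a b) := by
    rw [Icc_prod_eq]
    exact Measure.restrict_congr_set (Measure.set_prod_ae_eq Ioo_ae_eq_Icc Ioo_ae_eq_Icc)
  have hcont : Continuous fun p => fderiv ℝ f p (1, 0) + fderiv ℝ g p (0, 1) :=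
    ((hf.continuous_fderiv one_ne_zero).clm_apply continuous_const).add
      ((hg.continuous_fderiv one_ne_zero).clm_apply continuous_const)
  simp only [hbox, pdx_eq_fderiv (hf' _), pdy_eq_fderiv (hg' _)]
  exact integral_divergence_prod_Icc_of_hasFDerivAt_of_le f g _ _ a b hab
    hf.continuous.continuousOn hg.continuous.continuousOn (fun p _ => (hf' p).hasFDerivAt)
    (fun p _ => (hg' p).hasFDerivAt) (hcont.continuousOn.integrableOn_compact isCompact_Icc)

end Integration

section EnergyIdentity

/-- The spatial part `z ↦ α z_x + (w z)_x + z_xxx + z_xyy - z_xxxxx` of the Kawahara equation with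
the quadratic term replaced by transport along a given field `w`; the product rule is already
carried out in `(w z)_x`. -/
noncomputable def linearKawaharaOp (α : ℝ) (w z : ℝ × ℝ → ℝ) : ℝ × ℝ → ℝ := fun p =>
  α * pdx z p + (w p * pdx z p + pdx w p * z p) + pd 3 0 z p + pd 1 2 z p - pd 5 0 z p

/-- The `x`-component of the flux of the energy density `z ^ 2` under `linearKawaharaOp α w`. -/
noncomputable def energyFluxX (α : ℝ) (w z : ℝ × ℝ → ℝ) : ℝ × ℝ → ℝ := fun p =>
  (α + w p) * z p ^ 2 + 2 * (z p * pd 2 0 z p) - pdx z p ^ 2 - pdy z p ^ 2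
    - 2 * (z p * pd 4 0 z p) + 2 * (pdx z p * pd 3 0 z p) - pd 2 0 z p ^ 2

/-- The `y`-component of the flux of the energy density `z ^ 2` under `linearKawaharaOp α w`. -/
noncomputable def energyFluxY (z : ℝ × ℝ → ℝ) : ℝ × ℝ → ℝ := fun p => 2 * (z p * pd 1 1 z p)

/-- The energy `∫ z ^ 2` in the truncated strip `(0, R) × (0, L)`. -/
noncomputable def truncatedEnergy (R L : ℝ) (z : ℝ × ℝ → ℝ) : ℝ :=
  ∫ p in Ioo 0 R ×ˢ Ioo 0 L, z p ^ 2

variable {α R L : ℝ} {w z : ℝ × ℝ → ℝ} {p : ℝ × ℝ}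

lemma contDiff_energyFluxX (hw : ContDiff ℝ ∞ w) (hz : ContDiff ℝ ∞ z) :
    ContDiff ℝ ∞ (energyFluxX α w z) := by
  have hx : ContDiff ℝ ∞ (pdx z) := contDiff_pd hz 1 0
  have hy : ContDiff ℝ ∞ (pdy z) := contDiff_pd hz 0 1
  have hpd := contDiff_pd hz
  unfold energyFluxX
  fun_prop

lemma contDiff_energyFluxY (hz : ContDiff ℝ ∞ z) : ContDiff ℝ ∞ (energyFluxY z) :=
  contDiff_const.mul (hz.mul (contDiff_pd hz 1 1))

lemma pdx_energyFluxX (hw : DifferentiableAt ℝ w p) (hz : ContDiff ℝ ∞ z) :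
    pdx (energyFluxX α w z) p =
      2 * z p * (linearKawaharaOp α w z p - pd 1 2 z p) - pdx w p * z p ^ 2
        - 2 * pdy z p * pd 1 1 z p := by
  have hx : ∀ i j, HasDerivAt (fun x => pd i j z (x, p.2)) (pd (i + 1) j z p) p.1 := fun i j =>
    pd_succ_left i j z ▸ hasDerivAt_pdx (differentiable_pd hz i j p)
  refine HasDerivAt.deriv (HasDerivAt.congr_deriv
    ((((((((hasDerivAt_pdx hw).const_add α).mul ((hx 0 0).pow 2)).add
      (((hx 0 0).mul (hx 2 0)).const_mul 2)).sub ((hx 1 0).pow 2)).sub ((hx 0 1).pow 2)).sub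
      (((hx 0 0).mul (hx 4 0)).const_mul 2)).add
      (((hx 1 0).mul (hx 3 0)).const_mul 2) |>.sub ((hx 2 0).pow 2)) ?_)
  change _ = 2 * pd 0 0 z p * (α * pd 1 0 z p + (w p * pd 1 0 z p + pdx w p * pd 0 0 z p)
    + pd 3 0 z p + pd 1 2 z p - pd 5 0 z p - pd 1 2 z p) - pdx w p * pd 0 0 z p ^ 2
    - 2 * pd 0 1 z p * pd 1 1 z p
  simp only [Pi.pow_apply, Prod.mk.eta, Nat.cast_ofNat, Nat.add_one_sub_one, pow_one, zero_add,
    Nat.reduceAdd]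
  ring

lemma pdy_energyFluxY (hz : ContDiff ℝ ∞ z) :
    pdy (energyFluxY z) p = 2 * pdy z p * pd 1 1 z p + 2 * z p * pd 1 2 z p := by
  have hy : HasDerivAt (fun y => pd 1 1 z (p.1, y)) (pd 1 2 z p) p.2 :=
    pd_succ_right hz 1 1 ▸ hasDerivAt_pdy (differentiable_pd hz 1 1 p)
  refine HasDerivAt.deriv (HasDerivAt.congr_deriv
    (((hasDerivAt_pdy (differentiable_pd hz 0 0 p)).mul hy).const_mul 2) ?_)
  change 2 * (pdy z p * pd 1 1 z p + z p * pd 1 2 z p) = _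
  ring

lemma two_mul_linearKawaharaOp (hw : DifferentiableAt ℝ w p) (hz : ContDiff ℝ ∞ z) :
    2 * z p * linearKawaharaOp α w z p =
      pdx (energyFluxX α w z) p + pdy (energyFluxY z) p + pdx w p * z p ^ 2 := by
  rw [pdx_energyFluxX hw hz, pdy_energyFluxY hz]
  ring

lemma integrableOn_rect {f : ℝ × ℝ → ℝ} (hf : Continuous f) (R L : ℝ) :
    IntegrableOn f (Ioo 0 R ×ˢ Ioo 0 L) :=
  integrableOn_of_subset_isCompact hf (isCompact_Icc.prod isCompact_Icc)
    (prod_mono Ioo_subset_Icc_self Ioo_subset_Icc_self)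

lemma setIntegral_mul_linearKawaharaOp (hw : ContDiff ℝ ∞ w) (hz : ContDiff ℝ ∞ z)
    (hR : 0 ≤ R) (hL : 0 ≤ L) (hsides : ∀ x > 0, z (x, 0) = 0 ∧ z (x, L) = 0) :
    ∫ p in Ioo 0 R ×ˢ Ioo 0 L, 2 * z p * linearKawaharaOp α w z p =
      (∫ y in 0..L, energyFluxX α w z (R, y)) - (∫ y in 0..L, energyFluxX α w z (0, y)) +
        ∫ p in Ioo 0 R ×ˢ Ioo 0 L, pdx w p * z p ^ 2 := by
  have hX : ContDiff ℝ ∞ (energyFluxX α w z) := contDiff_energyFluxX hw hz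
  have hY : ContDiff ℝ ∞ (energyFluxY z) := contDiff_energyFluxY hz
  have hdiv : Continuous fun p => pdx (energyFluxX α w z) p + pdy (energyFluxY z) p :=
    (contDiff_pd hX 1 0).continuous.add (contDiff_pd hY 0 1).continuous
  have hrest : Continuous fun p => pdx w p * z p ^ 2 :=
    (contDiff_pd hw 1 0).continuous.mul (hz.continuous.pow 2)
  have hY0 : ∀ y, (∀ x > 0, z (x, y) = 0) → ∫ x in 0..R, energyFluxY z (x, y) = 0 :=
    fun y hy => intervalIntegral.integral_zero_ae <| .of_forall fun x hx => by
      rw [uIoc_of_le hR] at hx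
      simp [energyFluxY, hy x hx.1]
  simp only [two_mul_linearKawaharaOp (hw.differentiable (by simp) _) hz]
  rw [integral_add (integrableOn_rect hdiv R L) (integrableOn_rect hrest R L),
    setIntegral_divergence_rect (contDiff_infty.1 hX 1) (contDiff_infty.1 hY 1)
      (a := (0, 0)) (b := (R, L)) ⟨hR, hL⟩,
    hY0 0 fun x hx => (hsides x hx).1, hY0 L fun x hx => (hsides x hx).2]
  ring

lemma energyFluxX_left_nonpos (hleft : ∀ y ∈ Ioo 0 L, z (0, y) = 0 ∧ pdx z (0, y) = 0) {y : ℝ}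
    (hy : y ∈ Ioo 0 L) : energyFluxX α w z (0, y) ≤ 0 := by
  have hpdy : pdy z (0, y) = 0 := by
    have hzero : (fun s => z (0, s)) =ᶠ[𝓝 y] fun _ => 0 := by
      filter_upwards [Ioo_mem_nhds hy.1 hy.2] with s hs using (hleft s hs).1
    exact hzero.deriv_eq.trans (deriv_const y 0)
  simp [energyFluxX, hleft y hy, hpdy, sq_nonneg]

lemma neg_setIntegral_mul_linearKawaharaOp_le (hw : ContDiff ℝ ∞ w) (hz : ContDiff ℝ ∞ z)
    (hR : 0 ≤ R) (hL : 0 ≤ L) (hleft : ∀ y ∈ Ioo 0 L, z (0, y) = 0 ∧ pdx z (0, y) = 0)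
    (hsides : ∀ x > 0, z (x, 0) = 0 ∧ z (x, L) = 0) {C δ : ℝ}
    (hC : ∀ p ∈ Ioo 0 R ×ˢ Ioo 0 L, |pdx w p| ≤ C)
    (hδ : ∀ y ∈ Ioo 0 L, |energyFluxX α w z (R, y)| ≤ δ) :
    -∫ p in Ioo 0 R ×ˢ Ioo 0 L, 2 * z p * linearKawaharaOp α w z p ≤
      C * truncatedEnergy R L z + L * δ := by
  have hX : Continuous (energyFluxX α w z) := (contDiff_energyFluxX hw hz).continuous
  have hwx : Continuous (pdx w) := (contDiff_pd hw 1 0).continuous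
  have hz0 : Continuous z := hz.continuous
  have hright : -∫ y in 0..L, energyFluxX α w z (R, y) ≤ L * δ := by
    have h := intervalIntegral.integral_mono_on_of_le_Ioo (μ := volume) hL
      (Continuous.intervalIntegrable (by fun_prop) 0 L) intervalIntegrable_const
      fun y hy => (neg_le_abs _).trans (hδ y hy)
    simpa using h
  have hzero : ∫ y in 0..L, energyFluxX α w z (0, y) ≤ 0 := by
    have h := intervalIntegral.integral_mono_on_of_le_Ioo (μ := volume) hL
      (Continuous.intervalIntegrable (by fun_prop) 0 L) (intervalIntegrable_const (c := 0))
      fun y hy => energyFluxX_left_nonpos (α := α) (w := w) hleft hy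
    simpa using h
  have htransport : -∫ p in Ioo 0 R ×ˢ Ioo 0 L, pdx w p * z p ^ 2 ≤ C * truncatedEnergy R L z := by
    rw [← integral_neg, truncatedEnergy, ← integral_const_mul]
    refine setIntegral_mono_on (integrableOn_rect (by fun_prop) R L)
      (integrableOn_rect (by fun_prop) R L) (measurableSet_Ioo.prod measurableSet_Ioo)
      fun p hp => ?_
    rw [← neg_mul]
    exact mul_le_mul_of_nonneg_right ((neg_le_abs _).trans (hC p hp)) (sq_nonneg _)
  rw [setIntegral_mul_linearKawaharaOp hw hz hR hL hsides]
  linarith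

lemma hasDerivAt_truncatedEnergy {z : ℝ → ℝ × ℝ → ℝ} (hz : ContDiff ℝ 1 (uncurry z)) (R L t : ℝ) :
    HasDerivAt (fun τ => truncatedEnergy R L (z τ))
      (∫ p in Ioo 0 R ×ˢ Ioo 0 L, 2 * z t p * deriv (fun s => z s p) t) t := by
  have hderiv : ∀ t p, HasDerivAt (fun s => z s p) (deriv (fun s => z s p) t) t := fun t p =>
    ((hz.comp (f := fun s => (s, p)) (by fun_prop)).differentiable one_ne_zero t).hasDerivAt
  have hzt : ContDiff ℝ 0 fun q : ℝ × ℝ × ℝ => deriv (fun s => z s q.2) q.1 :=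
    contDiff_deriv_param (f := fun (q : ℝ × ℝ × ℝ) s => z s q.2)
      (hz.comp (g := uncurry z) (f := fun r : (ℝ × ℝ × ℝ) × ℝ => (r.2, r.1.2)) (by fun_prop))
      contDiff_fst (by simp)
  have hcont : Continuous (uncurry fun t p => 2 * z t p * deriv (fun s => z s p) t) :=
    (continuous_const.mul hz.continuous).mul hzt.continuous
  refine hasDerivAt_setIntegral_of_continuous (isCompact_Icc.prod isCompact_Icc)
    (measurableSet_Ioo.prod measurableSet_Ioo)
    (prod_mono Ioo_subset_Icc_self Ioo_subset_Icc_self)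
    (fun t => (hz.continuous.comp (Continuous.prodMk_right t)).pow 2)
    hcont (fun t p => ?_) t
  exact ((hderiv t p).pow 2).congr_deriv (by simp)

lemma truncatedEnergy_mono (hz : Continuous z) (L : ℝ) :
    Monotone fun R => truncatedEnergy R L z := fun _ R' h =>
  setIntegral_mono_set (integrableOn_rect (hz.pow 2) R' L) (.of_forall fun _ => sq_nonneg _)
    (prod_mono (Ioo_subset_Ioo_right h) le_rfl).eventuallyLE

lemma eq_zero_of_truncatedEnergy_nonpos (hz : Continuous z) (h : truncatedEnergy R L z ≤ 0)
    (hp : p ∈ Ioo 0 R ×ˢ Ioo 0 L) : z p = 0 := by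
  have hnonneg : 0 ≤ᵐ[volume.restrict (Ioo 0 R ×ˢ Ioo 0 L)] fun p => z p ^ 2 :=
    .of_forall fun _ => sq_nonneg _
  have hae := (setIntegral_eq_zero_iff_of_nonneg_ae hnonneg (integrableOn_rect (hz.pow 2) R L)).1
    (h.antisymm (integral_nonneg_of_ae hnonneg))
  exact pow_eq_zero_iff two_ne_zero |>.1 <| Measure.eqOn_open_of_ae_eq hae
    (isOpen_Ioo.prod isOpen_Ioo) (hz.pow 2).continuousOn continuousOn_const hp

end EnergyIdentity

section DecayingFields

/-- The half-strip `(0, ∞) × (0, L)`. -/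
def halfStrip (L : ℝ) : Set (ℝ × ℝ) := Ioi 0 ×ˢ Ioo 0 L

/-- The filter on points `(t, x, y)` of space-time expressing `x → ∞`, uniformly in `t ∈ [0, T]`
and `y ∈ (0, L)`. -/
def stripEnd (L T : ℝ) : Filter (ℝ × ℝ × ℝ) := 𝓟 (Icc 0 T) ×ˢ atTop ×ˢ 𝓟 (Ioo 0 L)

/-- Smooth fields with the homogeneous boundary data of the half-strip problem, all of whose
spatial derivatives up to order four tend to zero as `x → ∞`, uniformly in `t` and `y`. -/
structure IsDecayingStripField (L T : ℝ) (u : ℝ → ℝ × ℝ → ℝ) : Prop where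
  contDiff : ContDiff ℝ ∞ (uncurry u)
  left : ∀ t ∈ Icc 0 T, ∀ y ∈ Ioo 0 L, u t (0, y) = 0 ∧ pdx (u t) (0, y) = 0
  sides : ∀ t ∈ Icc 0 T, ∀ x > 0, u t (x, 0) = 0 ∧ u t (x, L) = 0
  tendsto_pd : ∀ i j, i + j ≤ 4 →
    Tendsto (fun q : ℝ × ℝ × ℝ => pd i j (u q.1) q.2) (stripEnd L T) (𝓝 0)

variable {L T α : ℝ} {u v w z : ℝ → ℝ × ℝ → ℝ}

lemma eventually_stripEnd {P : ℝ × ℝ × ℝ → Prop} :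
    (∀ᶠ q in stripEnd L T, P q) ↔
      ∃ M, ∀ t ∈ Icc 0 T, ∀ x ≥ M, ∀ y ∈ Ioo 0 L, P (t, x, y) := by
  have hbasis := (hasBasis_principal (Icc 0 T)).prod
    ((atTop_basis (α := ℝ)).prod (hasBasis_principal (Ioo 0 L)))
  refine hbasis.eventually_iff.trans ⟨?_, ?_⟩
  · rintro ⟨⟨_, M, _⟩, -, h⟩
    exact ⟨M, fun t ht x hx y hy => h ⟨ht, hx, hy⟩⟩
  · rintro ⟨M, h⟩
    exact ⟨((), M, ()), by simp, fun q hq => h q.1 hq.1 q.2.1 hq.2.1 q.2.2 hq.2.2⟩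

lemma exists_abs_le_of_tendsto_stripEnd {f : ℝ × ℝ × ℝ → ℝ} (hf : Continuous f)
    (hlim : Tendsto f (stripEnd L T) (𝓝 0)) :
    ∃ C, ∀ t ∈ Icc 0 T, ∀ p ∈ halfStrip L, |f (t, p)| ≤ C := by
  obtain ⟨M, hM⟩ := eventually_stripEnd.1 (hlim.abs.eventually_le_const (by simp : |(0 : ℝ)| < 1))
  obtain ⟨C, hC⟩ := (isCompact_Icc (a := (0 : ℝ)) (b := T)).prod
    ((isCompact_Icc (a := (0 : ℝ)) (b := M)).prod (isCompact_Icc (a := (0 : ℝ)) (b := L)))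
    |>.exists_bound_of_continuousOn hf.continuousOn
  refine ⟨max C 1, fun t ht p hp => ?_⟩
  rcases le_total p.1 M with hx | hx
  · exact le_max_of_le_left (hC (t, p) ⟨ht, ⟨hp.1.le, hx⟩, Ioo_subset_Icc_self hp.2⟩)
  · exact le_max_of_le_right (hM t ht p.1 hx p.2 hp.2)

namespace IsDecayingStripField

lemma contDiff_slice (hu : IsDecayingStripField L T u) (t : ℝ) : ContDiff ℝ ∞ (u t) :=
  hu.contDiff.comp (contDiff_prodMk_right t)

lemma linear_comb (hu : IsDecayingStripField L T u) (hv : IsDecayingStripField L T v) (a b : ℝ) :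
    IsDecayingStripField L T (a • u + b • v) where
  contDiff := (hu.contDiff.const_smul a).add (hv.contDiff.const_smul b)
  left t ht y hy := by
    have hpdx :=
      congrFun (pd_linear_comb (hu.contDiff_slice t) (hv.contDiff_slice t) a b 1 0) (0, y)
    exact ⟨by simp [hu.left t ht y hy, hv.left t ht y hy],
      hpdx.trans (by simp [pd, hu.left t ht y hy, hv.left t ht y hy])⟩
  sides t ht x hx := by simp [hu.sides t ht x hx, hv.sides t ht x hx]
  tendsto_pd i j hij := by
    have hpd : ∀ q : ℝ × ℝ × ℝ, pd i j ((a • u + b • v) q.1) q.2 =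
        a * pd i j (u q.1) q.2 + b * pd i j (v q.1) q.2 := fun q =>
      congrFun (pd_linear_comb (hu.contDiff_slice q.1) (hv.contDiff_slice q.1) a b i j) q.2
    simpa only [hpd, mul_zero, add_zero] using
      ((hu.tendsto_pd i j hij).const_mul a).add ((hv.tendsto_pd i j hij).const_mul b)

lemma tendsto_energyFluxX (hw : IsDecayingStripField L T w) (hz : IsDecayingStripField L T z)
    (α : ℝ) :
    Tendsto (fun q : ℝ × ℝ × ℝ => energyFluxX α (w q.1) (z q.1) q.2) (stripEnd L T) (𝓝 0) := by
  have hlim := hz.tendsto_pd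
  have hflux : Tendsto (fun q : ℝ × ℝ × ℝ => energyFluxX α (w q.1) (z q.1) q.2) (stripEnd L T)
      (𝓝 _) := (((((((hw.tendsto_pd 0 0 (by simp)).const_add α).mul
    ((hlim 0 0 (by simp)).pow 2)).add
    (((hlim 0 0 (by simp)).mul (hlim 2 0 (by simp))).const_mul 2)).sub
    ((hlim 1 0 (by simp)).pow 2)).sub ((hlim 0 1 (by simp)).pow 2)).sub
    (((hlim 0 0 (by simp)).mul (hlim 4 0 (by simp))).const_mul 2)).add
    (((hlim 1 0 (by simp)).mul (hlim 3 0 (by simp))).const_mul 2) |>.sub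
    ((hlim 2 0 (by simp)).pow 2)
  simpa using hflux

lemma truncatedEnergy_le_gronwallBound (hw : IsDecayingStripField L T w)
    (hz : IsDecayingStripField L T z)
    (heq : ∀ t ∈ Icc 0 T, ∀ p ∈ halfStrip L,
      deriv (fun s => z s p) t + linearKawaharaOp α (w t) (z t) p = 0)
    (h0 : ∀ p ∈ halfStrip L, z 0 p = 0) {C δ R : ℝ} (hR : 0 ≤ R) (hL : 0 ≤ L)
    (hC : ∀ t ∈ Icc 0 T, ∀ p ∈ halfStrip L, |pdx (w t) p| ≤ C)
    (hδ : ∀ t ∈ Icc 0 T, ∀ y ∈ Ioo 0 L, |energyFluxX α (w t) (z t) (R, y)| ≤ δ) :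
    ∀ t ∈ Icc 0 T, truncatedEnergy R L (z t) ≤ gronwallBound 0 C (L * δ) t := by
  have hrect : Ioo 0 R ×ˢ Ioo 0 L ⊆ halfStrip L := prod_mono Ioo_subset_Ioi_self le_rfl
  have hmeas : MeasurableSet (Ioo 0 R ×ˢ Ioo 0 L) := measurableSet_Ioo.prod measurableSet_Ioo
  have hderiv := hasDerivAt_truncatedEnergy (contDiff_infty.1 hz.contDiff 1) R L
  have hinit : truncatedEnergy R L (z 0) = 0 :=
    setIntegral_eq_zero_of_forall_eq_zero fun p hp => by simp [h0 p (hrect hp)]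
  have hbound : ∀ t ∈ Ico 0 T,
      ∫ p in Ioo 0 R ×ˢ Ioo 0 L, 2 * z t p * deriv (fun s => z s p) t ≤
        C * truncatedEnergy R L (z t) + L * δ := by
    intro t ht
    replace ht := Ico_subset_Icc_self ht
    calc ∫ p in Ioo 0 R ×ˢ Ioo 0 L, 2 * z t p * deriv (fun s => z s p) t
        = -∫ p in Ioo 0 R ×ˢ Ioo 0 L, 2 * z t p * linearKawaharaOp α (w t) (z t) p := by
          rw [← integral_neg]
          refine setIntegral_congr_fun hmeas fun p hp => ?_
          simp only [eq_neg_of_add_eq_zero_left (heq t ht p (hrect hp)), mul_neg]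
      _ ≤ C * truncatedEnergy R L (z t) + L * δ :=
          neg_setIntegral_mul_linearKawaharaOp_le (hw.contDiff_slice t) (hz.contDiff_slice t)
            hR hL (hz.left t ht) (hz.sides t ht) (fun p hp => hC t ht p (hrect hp)) (hδ t ht)
  simpa using le_gronwallBound_of_liminf_deriv_right_le
    (fun t _ => (hderiv t).continuousAt.continuousWithinAt)
    (fun t _ _ hr => (hderiv t).hasDerivWithinAt.liminf_right_slope_le hr) hinit.le hbound

theorem eq_zero_of_linearKawahara (hw : IsDecayingStripField L T w)
    (hz : IsDecayingStripField L T z)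
    (heq : ∀ t ∈ Icc 0 T, ∀ p ∈ halfStrip L,
      deriv (fun s => z s p) t + linearKawaharaOp α (w t) (z t) p = 0)
    (h0 : ∀ p ∈ halfStrip L, z 0 p = 0) : ∀ t ∈ Icc 0 T, ∀ p ∈ halfStrip L, z t p = 0 := by
  intro t ht p hp
  have hL : 0 ≤ L := hp.2.1.le.trans hp.2.2.le
  obtain ⟨C, hC⟩ := exists_abs_le_of_tendsto_stripEnd
    (contDiff_uncurry_pdx hw.contDiff (m := 0) (by simp)).continuous (hw.tendsto_pd 1 0 (by simp))
  have hz0 : Continuous (z t) := (hz.contDiff_slice t).continuous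
  have hle : ∀ δ > 0, truncatedEnergy (p.1 + 1) L (z t) ≤ gronwallBound 0 C (L * δ) t := by
    intro δ hδ
    obtain ⟨M, hM⟩ := eventually_stripEnd.1
      ((hw.tendsto_energyFluxX hz α).abs.eventually_le_const (by simpa using hδ))
    have hR : 0 ≤ max M (p.1 + 1) := le_max_of_le_right (add_nonneg hp.1.le zero_le_one)
    exact (truncatedEnergy_mono hz0 L (le_max_right M _)).trans <|
      hw.truncatedEnergy_le_gronwallBound hz heq h0 hR hL hC
        (fun s hs y hy => hM s hs _ (le_max_left _ _) y hy) t ht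
  have hlim : Tendsto (fun δ => gronwallBound 0 C (L * δ) t) (𝓝[>] 0) (𝓝 0) := by
    have hcont : Continuous fun δ => gronwallBound 0 C (L * δ) t :=
      (gronwallBound_continuous_ε 0 C t).comp (continuous_const_mul L)
    simpa [gronwallBound_ε0_δ0] using (hcont.tendsto 0).mono_left nhdsWithin_le_nhds
  exact eq_zero_of_truncatedEnergy_nonpos hz0
    (ge_of_tendsto hlim (eventually_mem_nhdsWithin.mono hle)) ⟨⟨hp.1, lt_add_one _⟩, hp.2⟩

end IsDecayingStripField

end DecayingFields

section Kawahara

variable {L T k α : ℝ} {u u₁ u₂ : ℝ → ℝ × ℝ → ℝ}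

/-- Solutions of the 2D Kawahara equation in the half-strip that decay as `x → ∞` together with
their derivatives up to order four. -/
structure IsDecayingKawaharaSolution (L T α : ℝ) (u : ℝ → ℝ × ℝ → ℝ) : Prop
    extends IsDecayingStripField L T u where
  equation : ∀ t ∈ Icc 0 T, ∀ p ∈ halfStrip L,
    deriv (fun s => u s p) t + α * pdx (u t) p + u t p * pdx (u t) p +
      pd 3 0 (u t) p + pd 1 2 (u t) p - pd 5 0 (u t) p = 0

lemma IsRegularKawaharaSolution.isDecayingKawaharaSolution (hk : 0 ≤ k)
    (hu : IsRegularKawaharaSolution L T k α (halfStrip L) u) :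
    IsDecayingKawaharaSolution L T α u := by
  obtain ⟨hsmooth, heq, hleft, hsides, -, hdecay, -⟩ := hu
  refine ⟨⟨hsmooth, hleft, hsides, fun i j hij => Metric.tendsto_nhds.2 fun ε hε => ?_⟩, heq⟩
  obtain ⟨M, hM⟩ := hdecay i j (by lia) (ε / 2) (half_pos hε)
  refine eventually_stripEnd.2 ⟨max M 0, fun t ht x hx y _ => ?_⟩
  have hweight : 1 ≤ exp (k * x / 2) := by
    have hx0 : 0 ≤ x := (le_max_right M 0).trans hx
    exact one_le_exp (by positivity)
  calc dist (pd i j (u t) (x, y)) 0 = |pd i j (u t) (x, y)| := by simp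
    _ ≤ exp (k * x / 2) * |pd i j (u t) (x, y)| := le_mul_of_one_le_left (abs_nonneg _) hweight
    _ = |exp (k * x / 2) * pd i j (u t) (x, y)| := by rw [abs_mul, abs_exp]
    _ ≤ ε / 2 := hM x ((le_max_left M 0).trans hx) y t ht
    _ < ε := half_lt_self hε

lemma IsDecayingKawaharaSolution.sub_equation (h₁ : IsDecayingKawaharaSolution L T α u₁)
    (h₂ : IsDecayingKawaharaSolution L T α u₂) {t : ℝ} (ht : t ∈ Icc 0 T) {p : ℝ × ℝ}
    (hp : p ∈ halfStrip L) :
    deriv (fun s => ((1 : ℝ) • u₁ + (-1 : ℝ) • u₂) s p) t +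
      linearKawaharaOp α (((1 / 2 : ℝ) • u₁ + (1 / 2 : ℝ) • u₂) t)
        (((1 : ℝ) • u₁ + (-1 : ℝ) • u₂) t) p = 0 := by
  have hpd : ∀ a b : ℝ, ∀ i j, pd i j ((a • u₁ + b • u₂) t) p =
      a * pd i j (u₁ t) p + b * pd i j (u₂ t) p := fun a b i j =>
    congrFun (pd_linear_comb (h₁.contDiff_slice t) (h₂.contDiff_slice t) a b i j) p
  have hpdx : ∀ a b : ℝ, pdx ((a • u₁ + b • u₂) t) p = a * pdx (u₁ t) p + b * pdx (u₂ t) p :=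
    fun a b => hpd a b 1 0
  have hdiff : ∀ {u}, IsDecayingKawaharaSolution L T α u → DifferentiableAt ℝ (fun s => u s p) t :=
    fun h => (h.contDiff.comp (f := fun s => (s, p)) (by fun_prop)).differentiable (by simp) t
  have hderiv : deriv (fun s => ((1 : ℝ) • u₁ + (-1 : ℝ) • u₂) s p) t =
      1 * deriv (fun s => u₁ s p) t + -1 * deriv (fun s => u₂ s p) t :=
    (((hdiff h₁).hasDerivAt.const_mul 1).add ((hdiff h₂).hasDerivAt.const_mul (-1))).deriv
  have heq₁ := h₁.equation t ht p hp
  have heq₂ := h₂.equation t ht p hp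
  simp only [linearKawaharaOp, hpd, hpdx]
  rw [hderiv]
  simp only [Pi.add_apply, Pi.smul_apply, smul_eq_mul]
  linear_combination heq₁ - heq₂

theorem kawahara_uniqueness_general (h₁ : IsDecayingKawaharaSolution L T α u₁)
    (h₂ : IsDecayingKawaharaSolution L T α u₂) (h0 : ∀ p ∈ halfStrip L, u₁ 0 p = u₂ 0 p) :
    ∀ t ∈ Icc 0 T, ∀ p ∈ halfStrip L, u₁ t p = u₂ t p := by
  have hzero := (h₁.linear_comb h₂.toIsDecayingStripField (1 / 2) (1 / 2)).eq_zero_of_linearKawahara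
    (h₁.linear_comb h₂.toIsDecayingStripField 1 (-1)) (fun _ ht _ hp => h₁.sub_equation h₂ ht hp)
    (fun p hp => by simp [h0 p hp])
  intro t ht p hp
  simpa [← sub_eq_add_neg, sub_eq_zero] using hzero t ht p hp

end Kawahara

end

/-- Uniqueness part of Theorem 3.1: two regular solutions of the
initial-boundary value problem for the 2D Kawahara equation on the half-strip
`D = (0,∞) × (0,L)` with the same initial data coincide. -/
theorem kawahara_uniqueness (L T k α : ℝ)
    (hL : 0 < L) (hT : 0 < T) (hk : 0 < k) (hka : 3 - 5 * k ^ 2 > 0)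
    (hα : α = 0 ∨ α = 1)
    (D : Set (ℝ × ℝ)) (hD : D = Set.Ioi (0:ℝ) ×ˢ Set.Ioo 0 L)
    (u₁ u₂ : ℝ → ℝ × ℝ → ℝ)
    (h₁ : IsRegularKawaharaSolution L T k α D u₁)
    (h₂ : IsRegularKawaharaSolution L T k α D u₂)
    (h0 : ∀ p ∈ D, u₁ 0 p = u₂ 0 p) :
    ∀ t ∈ Set.Icc (0:ℝ) T, ∀ p ∈ D, u₁ t p = u₂ t p := by
  subst hD
  exact kawahara_uniqueness_general (h₁.isDecayingKawaharaSolution hk.le)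
    (h₂.isDecayingKawaharaSolution hk.le) h0
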